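/- Let (a_n) be a sequence of positive reals with a_n/n → ∞. For every fixed positive integer k and every bounded Borel set B ⊂ ℝ^k, the probability that (y_1, …, y_k) ∈ B, where y is distributed according to the normalized Lebesgue measure on the simplex Σ_n(a_n) = {y ∈ ℝ^n : y_i ≥ 0, Σ y_i ≤ a_n}, tends to 0 as n → ∞; that is, the marginal distributions of the first k coordinates converge vaguely to the zero measure. -/

import Mathlib

open MeasureTheory Filter Topology

/-- The normalized Lebesgue measure on the simplex
`Σ_n(a) = {y ∈ ℝ^n : y_i ≥ 0, ∑ y_i ≤ a}`. -/
noncomputable def simplexMeasure (n : ℕ) (a : ℝ) : Measure (Fin n → ℝ) :=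
  (volume {y : Fin n → ℝ | (∀ i, 0 ≤ y i) ∧ ∑ i, y i ≤ a})⁻¹ •
    volume.restrict {y : Fin n → ℝ | (∀ i, 0 ≤ y i) ∧ ∑ i, y i ≤ a}

/-!
For `0 ≤ M < a`, the part of `Σ_n(a)` where `y_i ≥ M` is the translate by `M e_i` of `Σ_n(a - M)`,
which is the homothetic image `(1 - M / a) Σ_n(a)`. Hence `y_i ≥ M` has probability
`(1 - M / a) ^ n`, and by Bernoulli's inequality `y_i < M` has probability at most `n M / a`. A set
on which some coordinate is bounded above therefore has probability `O(n / a_n) → 0`.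
-/

open scoped Pointwise ENNReal

/-- The solid simplex `{y ∈ ℝ^ι : y_i ≥ 0, ∑ y_i ≤ a}`, that is `Σ_n(a)` for `ι = Fin n`;
Mathlib's `stdSimplex` is the face `∑ y_i = 1` of the case `a = 1`. -/
def solidSimplex (ι : Type*) [Fintype ι] (a : ℝ) : Set (ι → ℝ) :=
  {y | (∀ i, 0 ≤ y i) ∧ ∑ i, y i ≤ a}

section SolidSimplex

variable {ι : Type*} [Fintype ι] {a M : ℝ}

variable (ι a) in
theorem isCompact_solidSimplex : IsCompact (solidSimplex ι a) := by
  have hclosed : IsClosed (solidSimplex ι a) :=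
    (isClosed_Ici (a := (0 : ι → ℝ))).inter
      (isClosed_le (continuous_finsetSum _ fun i _ ↦ continuous_apply i) continuous_const)
  refine isCompact_Icc.of_isClosed_subset hclosed (?_ : _ ⊆ Set.Icc 0 fun _ ↦ a)
  exact fun y hy ↦ ⟨hy.1, fun i ↦
    (Finset.single_le_sum (fun j _ ↦ hy.1 j) (Finset.mem_univ i)).trans hy.2⟩

theorem smul_solidSimplex {r : ℝ} (hr : 0 < r) (a : ℝ) :
    r • solidSimplex ι a = solidSimplex ι (r * a) := by
  ext y
  simp only [Set.mem_smul_set_iff_inv_smul_mem₀ hr.ne', solidSimplex, Set.mem_ofPred_eq,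
    Pi.smul_apply, smul_eq_mul, ← Finset.mul_sum, inv_mul_le_iff₀ hr,
    mul_nonneg_iff_of_pos_left (inv_pos.2 hr)]

theorem preimage_add_single_solidSimplex_inter_le [DecidableEq ι] (hM : 0 ≤ M) (a : ℝ) (i : ι) :
    (· + Pi.single i M) ⁻¹' (solidSimplex ι a ∩ {y | M ≤ y i}) = solidSimplex ι (a - M) := by
  ext y
  have hsum : ∑ j, (y + Pi.single i M : ι → ℝ) j = ∑ j, y j + M := by
    simp [Finset.sum_add_distrib]
  have hsingle : 0 ≤ (Pi.single i M : ι → ℝ) := Pi.single_nonneg.2 hM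
  simp only [solidSimplex, Set.mem_preimage, Set.mem_inter_iff, Set.mem_ofPred_eq, hsum,
    ← le_sub_iff_add_le]
  constructor
  · rintro ⟨⟨hy, hya⟩, hyi⟩
    refine ⟨fun j ↦ ?_, hya⟩
    obtain rfl | hji := eq_or_ne j i
    · simpa using hyi
    · simpa [hji] using hy j
  · rintro ⟨hy, hya⟩
    exact ⟨⟨fun j ↦ add_nonneg (hy j) (hsingle j), hya⟩, by simpa using hy i⟩

theorem volume_solidSimplex_inter_le (hM : 0 ≤ M) (hMa : M < a) (i : ι) :
    volume (solidSimplex ι a ∩ {y | M ≤ y i}) =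
      ENNReal.ofReal ((1 - M / a) ^ Fintype.card ι) * volume (solidSimplex ι a) := by
  classical
  have ha : 0 < a := hM.trans_lt hMa
  have hr : 0 < 1 - M / a := sub_pos.2 ((div_lt_one ha).2 hMa)
  calc volume (solidSimplex ι a ∩ {y | M ≤ y i})
      = volume (solidSimplex ι (a - M)) := by
        rw [← preimage_add_single_solidSimplex_inter_le hM a i, measure_preimage_add_right]
    _ = volume ((1 - M / a) • solidSimplex ι a) := by
        rw [smul_solidSimplex hr, sub_mul, one_mul, div_mul_cancel₀ _ ha.ne']
    _ = ENNReal.ofReal ((1 - M / a) ^ Fintype.card ι) * volume (solidSimplex ι a) := by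
        rw [Measure.addHaar_smul_of_nonneg _ hr.le, Module.finrank_fintype_fun_eq_card]

theorem volume_solidSimplex_inter_lt (hM : 0 ≤ M) (hMa : M < a) (i : ι) :
    volume (solidSimplex ι a ∩ {y | y i < M}) =
      ENNReal.ofReal (1 - (1 - M / a) ^ Fintype.card ι) * volume (solidSimplex ι a) := by
  have hr : 0 ≤ 1 - M / a := sub_nonneg.2 (div_le_one_of_le₀ hMa.le (hM.trans hMa.le))
  have hfinite : volume (solidSimplex ι a) ≠ ∞ := (isCompact_solidSimplex ι a).measure_ne_top
  have hdiff : solidSimplex ι a ∩ {y | y i < M} =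
      solidSimplex ι a \ (solidSimplex ι a ∩ {y | M ≤ y i}) := by
    ext y; simp
  have hmeas : MeasurableSet (solidSimplex ι a ∩ {y | M ≤ y i}) :=
    (isCompact_solidSimplex ι a).measurableSet.inter
      (measurableSet_le measurable_const (measurable_pi_apply i))
  rw [hdiff, measure_sdiff Set.inter_subset_left hmeas.nullMeasurableSet
      (measure_ne_top_of_subset Set.inter_subset_left hfinite),
    volume_solidSimplex_inter_le hM hMa, ENNReal.ofReal_sub _ (pow_nonneg hr _),
    ENNReal.ofReal_one, ENNReal.sub_mul fun _ _ ↦ hfinite, one_mul]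

end SolidSimplex

theorem simplexMeasure_eq_cond (n : ℕ) (a : ℝ) :
    simplexMeasure n a = ProbabilityTheory.cond volume (solidSimplex (Fin n) a) :=
  rfl

theorem simplexMeasure_setOf_apply_lt_le {n : ℕ} {a M : ℝ} (ha : 0 < a) (hM : 0 ≤ M) (i : Fin n) :
    simplexMeasure n a {y | y i < M} ≤ ENNReal.ofReal (M / (a / n)) := by
  rw [div_div_eq_mul_div, mul_comm M, simplexMeasure_eq_cond]
  rcases lt_or_ge M a with hMa | haM
  · have bernoulli : 1 - (1 - M / a) ^ n ≤ n * M / a := by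
      have := one_add_mul_le_pow (a := -(M / a)) (by linarith [(div_lt_one ha).2 hMa]) n
      rw [mul_div_assoc, sub_eq_add_neg 1 (M / a)]
      linarith
    rw [ProbabilityTheory.cond_apply (isCompact_solidSimplex _ a).measurableSet,
      volume_solidSimplex_inter_lt hM hMa, Fintype.card_fin, mul_left_comm]
    exact (mul_le_of_le_one_right' (ENNReal.inv_mul_le_one _)).trans
      (ENNReal.ofReal_le_ofReal bernoulli)
  · have hn : (1 : ℝ) ≤ n := Nat.one_le_cast.2 i.pos
    have one_le : 1 ≤ n * M / a := (one_le_div ha).2 (haM.trans (le_mul_of_one_le_left hM hn))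
    exact prob_le_one.trans (ENNReal.one_le_ofReal.2 one_le)

theorem stmt3_general {a : ℕ → ℝ} (hlim : Tendsto (fun n => a n / n) atTop atTop) {k : ℕ}
    {B : Set (Fin k → ℝ)} {i : Fin k} (hB : BddAbove (Function.eval i '' B)) :
    Tendsto
      (fun n => simplexMeasure n (a n)
        {y : Fin n → ℝ | (fun j : Fin k => if h : (j : ℕ) < n then y ⟨j, h⟩ else 0) ∈ B})
      atTop (𝓝 0) := by
  obtain ⟨M, hM, hBM⟩ : ∃ M, 0 ≤ M ∧ ∀ x ∈ B, x i < M := by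
    obtain ⟨b, hb⟩ := hB
    exact ⟨|b| + 1, by positivity, fun x hx ↦
      (hb ⟨x, hx, rfl⟩).trans_lt ((le_abs_self b).trans_lt (lt_add_one _))⟩
  have hbound : Tendsto (fun n => ENNReal.ofReal (M / (a n / n))) atTop (𝓝 0) := by
    simpa using ENNReal.tendsto_ofReal (hlim.const_div_atTop M)
  refine tendsto_of_tendsto_of_tendsto_of_le_of_le' tendsto_const_nhds hbound
    (Eventually.of_forall fun _ ↦ zero_le) ?_
  filter_upwards [eventually_gt_atTop (i : ℕ), hlim.eventually_gt_atTop 0] with n hin hpos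
  have hn : (0 : ℝ) < n := Nat.cast_pos.2 (Nat.zero_lt_of_lt hin)
  have ha : 0 < a n := (div_pos_iff_of_pos_right hn).1 hpos
  refine (measure_mono fun y hy ↦ ?_).trans (simplexMeasure_setOf_apply_lt_le ha hM ⟨i, hin⟩)
  simpa [hin] using hBM _ hy

/-- If `a_n / n → ∞`, then for every bounded Borel set `B ⊆ ℝ^k` the probability that the
first `k` coordinates of a point distributed according to the normalized Lebesgue measure on
`Σ_n(a_n)` lie in `B` tends to `0`: the marginals converge vaguely to the zero measure. -/
theorem stmt3 (a : ℕ → ℝ) (ha : ∀ n, 0 < a n)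
    (hlim : Tendsto (fun n => a n / n) atTop atTop) (k : ℕ) (hk : 0 < k) :
    ∀ B : Set (Fin k → ℝ), MeasurableSet B → Bornology.IsBounded B →
      Tendsto
        (fun n => simplexMeasure n (a n)
          {y : Fin n → ℝ | (fun i : Fin k => if h : (i : ℕ) < n then y ⟨i, h⟩ else 0) ∈ B})
        atTop (𝓝 0) :=
  fun _ _ hB ↦ stmt3_general hlim (i := ⟨0, hk⟩) (hB.image_eval _).bddAbove
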